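/- Let 2 ≤ k ≤ n and 0 ≤ d ≤ n−1. The number of nonempty exposed faces of dimension d of the general permutahedron Π_{n−1}(k−1) ⊆ ℝ^n equals ∑ C(n,i)·C(n−i,j)·S(n−i−j, n−i−d−1)·(n−i−d−1)!, where the sum ranges over pairs of integers (i,j) with 0 ≤ i ≤ k−1 and k ≤ i+j ≤ n, and a summand is taken to be 0 whenever n−i−d−1 < 0. -/

import Mathlib

open Pointwise

noncomputable section

/-- The simplex Δ_F ⊆ ℝ^n for F ⊆ {0,…,n−1}. -/
def stdSimplexOn (n : ℕ) (F : Finset (Fin n)) : Set (Fin n → ℝ) :=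
  {x | (∀ i, 0 ≤ x i) ∧ (∀ i, i ∉ F → x i = 0) ∧ ∑ i, x i = 1}

/-- The general permutahedron Π_{n−1}(k−1) ⊆ ℝ^n, Minkowski sum of all Δ_F with |F| = k. -/
def genPerm (n k : ℕ) : Set (Fin n → ℝ) :=
  ∑ F ∈ Finset.univ.powersetCard k, stdSimplexOn n F

/-- P_{n−1}(v): convex hull of the orbit of v under coordinate permutations. -/
def permPoly {n : ℕ} (v : Fin n → ℝ) : Set (Fin n → ℝ) :=
  convexHull ℝ {w | ∃ σ : Equiv.Perm (Fin n), w = v ∘ σ}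

/-- Dimension of a subset of ℝ^n : dimension of its affine span. -/
def setDim {n : ℕ} (S : Set (Fin n → ℝ)) : ℕ :=
  Module.finrank ℝ (affineSpan ℝ S).direction

/-- Nonempty exposed face of P : the maximizer set of some linear functional. -/
def IsExpFace {n : ℕ} (P A : Set (Fin n → ℝ)) : Prop :=
  A.Nonempty ∧ ∃ L : (Fin n → ℝ) →ₗ[ℝ] ℝ, A = {x ∈ P | ∀ y ∈ P, L y ≤ L x}

/-- Stirling numbers of the second kind. -/
def stirling2 : ℕ → ℕ → ℕ
  | 0, 0 => 1
  | 0, _ + 1 => 0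
  | _ + 1, 0 => 0
  | n + 1, k + 1 => (k + 1) * stirling2 n (k + 1) + stirling2 n k

/-- i-th backward difference of u at position k. -/
def bdiff {n : ℕ} (u : Fin n → ℝ) (i : ℕ) (k : Fin n) : ℝ :=
  ∑ j ∈ Finset.range (i + 1), (-1 : ℝ) ^ j * (i.choose j) *
    u ⟨(k : ℕ) - j, lt_of_le_of_lt (Nat.sub_le _ _) k.isLt⟩

/-- The number of chains A_1 ⊆ ⋯ ⊆ A_ℓ of nonempty exposed faces of P with dim A_i = s i. -/
def flagCount {n : ℕ} (P : Set (Fin n → ℝ)) (l : ℕ) (s : Fin l → ℕ) : ℕ :=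
  Nat.card {A : Fin l → Set (Fin n → ℝ) //
    (∀ i, IsExpFace P (A i) ∧ setDim (A i) = s i) ∧ ∀ i j, i ≤ j → A i ⊆ A j}

/-- The exponential (l+1)-flag polynomial of P ⊆ ℝ^n (a polytope of dimension n−1). -/
def xiFlag {n : ℕ} (P : Set (Fin n → ℝ)) (l : ℕ) (x : Fin (l + 1) → ℝ) : ℝ :=
  ∑ s : Fin (l + 1) → Fin n, if Monotone s then
    ((flagCount P (l + 1) (fun i => (s i : ℕ)) : ℝ) / (Nat.factorial (n - (s 0 : ℕ)))) *
      ∏ i : Fin (l + 1), x i ^ (if (i : ℕ) = 0 then (s i : ℕ) else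
        (s i : ℕ) - (s ⟨(i : ℕ) - 1, lt_of_le_of_lt (Nat.sub_le _ _) i.isLt⟩ : ℕ))
  else 0

/-- The standard permutahedron Π_{n−1} ⊆ ℝ^n. -/
def stdPermutahedron (n : ℕ) : Set (Fin n → ℝ) :=
  convexHull ℝ {w | ∃ σ : Equiv.Perm (Fin n), ∀ i, w i = ((σ i : ℕ) : ℝ) + 1}

/-- E_m(t) = ∑_{j=0}^m t^j/j!, the degree-m Taylor polynomial of exp. -/
def Etaylor (m : ℕ) (t : ℝ) : ℝ :=
  ∑ j ∈ Finset.range (m + 1), t ^ j / (Nat.factorial j)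

end

/-!
Taking maximizers of a linear functional commutes with Minkowski sums, so the face of `Π_{n−1}(k−1)`
in direction `w` is `∑_{|F| = k} Δ_{argmax_F w}`. Two directions therefore give the same face iff
they have the same maximizers on every `k`-element set, that is, iff they induce the same preorder
once the elements that are maximal in no `k`-element set have been merged into one bottom level. So
faces correspond to ordered partitions with a bottom level `A` of fewer than `k` elements, a next
level `B` with `k ≤ |A| + |B|`, and further levels above.

If there are `m` levels above the bottom, the functionals constant on the face are the vectors
constant on each of these `m` levels and arbitrary on `A`; they form a space of dimension `|A| + m`,
so the face has dimension `n - |A| - m`. It remains to choose `A` and `B` and to count the maps of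
the other elements onto the `m - 1` levels above `B`.
-/

open Finset

section MaximalFaces

variable {E R F G κ : Type*} [AddCommMonoid E] [AddCommMonoid R] [PartialOrder R]
  [IsOrderedCancelAddMonoid R] [FunLike F E R] [AddMonoidHomClass F E R]
  [FunLike G E R] [AddMonoidHomClass G E R]

/-- The set of maximizers of `f` on a set. It is bundled as an additive map because taking
maximizers commutes with Minkowski sums, without any compactness assumption. -/
def maxFace (f : F) : Set E →+ Set E where
  toFun P := {x ∈ P | ∀ y ∈ P, f y ≤ f x}
  map_zero' := by ext x; simp +contextual
  map_add' P Q := by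
    ext x
    constructor
    · rintro ⟨⟨p, hp, q, hq, rfl⟩, hmax⟩
      refine ⟨p, ⟨hp, fun y hy => ?_⟩, q, ⟨hq, fun y hy => ?_⟩, rfl⟩
      · simpa only [map_add, add_le_add_iff_right] using hmax _ (Set.add_mem_add hy hq)
      · simpa only [map_add, add_le_add_iff_left] using hmax _ (Set.add_mem_add hp hy)
    · rintro ⟨p, ⟨hp, hpmax⟩, q, ⟨hq, hqmax⟩, rfl⟩
      refine ⟨Set.add_mem_add hp hq, ?_⟩
      rintro _ ⟨y, hy, z, hz, rfl⟩
      simpa only [map_add] using add_le_add (hpmax y hy) (hqmax z hz)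

theorem mem_maxFace {f : F} {P : Set E} {x : E} :
    x ∈ maxFace f P ↔ x ∈ P ∧ ∀ y ∈ P, f y ≤ f x := Iff.rfl

theorem maxFace_eq_self_iff {f : F} {P : Set E} :
    maxFace f P = P ↔ ∀ x ∈ P, ∀ y ∈ P, f x = f y := by
  constructor
  · intro h x hx y hy
    rw [← h] at hx hy
    exact (hy.2 x hx.1).antisymm (hx.2 y hy.1)
  · exact fun h => Set.Subset.antisymm (fun x hx => hx.1)
      fun x hx => ⟨hx, fun y hy => (h y hy x hx).le⟩

theorem mem_maxFace_of_add_mem_maxFace {f : F} {P Q : Set E} {x y : E} (hx : x ∈ P) (hy : y ∈ Q)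
    (hxy : x + y ∈ maxFace f (P + Q)) : x ∈ maxFace f P :=
  ⟨hx, fun z hz => by
    simpa only [map_add, add_le_add_iff_right] using hxy.2 (z + y) (Set.add_mem_add hz hy)⟩

theorem sum_nonempty_of_forall {s : Finset κ} {P : κ → Set E} (hP : ∀ i ∈ s, (P i).Nonempty) :
    (∑ i ∈ s, P i).Nonempty :=
  Finset.sum_induction P Set.Nonempty (fun _ _ => Set.Nonempty.add) Set.zero_nonempty hP

theorem maxFace_subset_of_maxFace_sum_subset {f : F} {g : G} {s : Finset κ} {P : κ → Set E}
    (hf : ∀ i ∈ s, (maxFace f (P i)).Nonempty)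
    (hfg : maxFace f (∑ i ∈ s, P i) ⊆ maxFace g (∑ i ∈ s, P i)) {i : κ} (hi : i ∈ s) :
    maxFace f (P i) ⊆ maxFace g (P i) := by
  classical
  intro x hx
  obtain ⟨y, hy⟩ : (maxFace f (∑ j ∈ s.erase i, P j)).Nonempty := by
    rw [map_sum]
    exact sum_nonempty_of_forall fun j hj => hf j (mem_of_mem_erase hj)
  rw [← add_sum_erase s P hi, map_add] at hfg
  exact mem_maxFace_of_add_mem_maxFace hx.1 hy.1 (hfg (Set.add_mem_add hx hy))

theorem maxFace_sum_eq_iff {f : F} {g : G} {s : Finset κ} {P : κ → Set E}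
    (hf : ∀ i ∈ s, (maxFace f (P i)).Nonempty) (hg : ∀ i ∈ s, (maxFace g (P i)).Nonempty) :
    maxFace f (∑ i ∈ s, P i) = maxFace g (∑ i ∈ s, P i) ↔
      ∀ i ∈ s, maxFace f (P i) = maxFace g (P i) := by
  constructor
  · exact fun h i hi => (maxFace_subset_of_maxFace_sum_subset hf h.subset hi).antisymm
      (maxFace_subset_of_maxFace_sum_subset hg h.symm.subset hi)
  · intro h
    rw [map_sum, map_sum, sum_congr rfl h]

end MaximalFaces

section Argmax

variable {ι α : Type*} [LinearOrder α]

/-- The points of `F` at which the weight `w` attains its maximum on `F`. -/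
def argmaxOn (w : ι → α) (F : Finset ι) : Finset ι := {x ∈ F | ∀ y ∈ F, w y ≤ w x}

theorem mem_argmaxOn {w : ι → α} {F : Finset ι} {x : ι} :
    x ∈ argmaxOn w F ↔ x ∈ F ∧ ∀ y ∈ F, w y ≤ w x := mem_filter

theorem argmaxOn_subset (w : ι → α) (F : Finset ι) : argmaxOn w F ⊆ F := filter_subset _ _

theorem argmaxOn_nonempty (w : ι → α) {F : Finset ι} (hF : F.Nonempty) :
    (argmaxOn w F).Nonempty :=
  (F.exists_max_image w hF).imp fun _ => mem_argmaxOn.2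

theorem argmaxOn_eq_self_iff {w : ι → α} {F : Finset ι} :
    argmaxOn w F = F ↔ ∀ x ∈ F, ∀ y ∈ F, w x = w y := by
  rw [argmaxOn, filter_eq_self]
  exact ⟨fun h x hx y hy => (h y hy x hx).antisymm (h x hx y hy),
    fun h x hx y hy => (h y hy x hx).le⟩

end Argmax

section SimplexFaces

variable {n : ℕ} {F G : Finset (Fin n)} {w x : Fin n → ℝ} {a : ℝ}

theorem single_mem_stdSimplexOn_iff {i : Fin n} :
    Pi.single i 1 ∈ stdSimplexOn n F ↔ i ∈ F := by
  constructor
  · intro h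
    by_contra hi
    simpa using h.2.1 i hi
  · intro hi
    have hnonneg : (0 : Fin n → ℝ) ≤ Pi.single i 1 := Pi.single_nonneg.2 zero_le_one
    refine ⟨hnonneg, fun j hj => ?_, by simp⟩
    exact Pi.single_eq_of_ne (ne_of_mem_of_not_mem hi hj).symm 1

theorem stdSimplexOn_inj : stdSimplexOn n F = stdSimplexOn n G ↔ F = G := by
  refine ⟨fun h => ?_, congrArg _⟩
  ext i
  rw [← single_mem_stdSimplexOn_iff, h, single_mem_stdSimplexOn_iff]

theorem stdSimplexOn_nonempty (hF : F.Nonempty) : (stdSimplexOn n F).Nonempty :=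
  hF.imp' (Pi.single · 1) fun _ => single_mem_stdSimplexOn_iff.2

theorem stdSimplexOn_mono (h : F ⊆ G) : stdSimplexOn n F ⊆ stdSimplexOn n G :=
  fun _ hx => ⟨hx.1, fun i hi => hx.2.1 i fun hF => hi (h hF), hx.2.2⟩

theorem nonempty_of_mem_stdSimplexOn (hx : x ∈ stdSimplexOn n F) : F.Nonempty := by
  rw [nonempty_iff_ne_empty]
  rintro rfl
  simpa [hx.2.1] using hx.2.2

theorem sub_dotProduct_of_mem_stdSimplexOn (hx : x ∈ stdSimplexOn n F) (w : Fin n → ℝ) (a : ℝ) :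
    a - w ⬝ᵥ x = ∑ i, (a - w i) * x i := by
  simp only [dotProduct, sub_mul, sum_sub_distrib, ← mul_sum, hx.2.2, mul_one]

theorem sub_mul_nonneg_of_mem_stdSimplexOn (hx : x ∈ stdSimplexOn n F) (hw : ∀ i ∈ F, w i ≤ a)
    (i : Fin n) : 0 ≤ (a - w i) * x i := by
  by_cases hi : i ∈ F
  · exact mul_nonneg (sub_nonneg.2 (hw i hi)) (hx.1 i)
  · rw [hx.2.1 i hi, mul_zero]

theorem dotProduct_le_of_mem_stdSimplexOn (hx : x ∈ stdSimplexOn n F) (hw : ∀ i ∈ F, w i ≤ a) :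
    w ⬝ᵥ x ≤ a := by
  rw [← sub_nonneg, sub_dotProduct_of_mem_stdSimplexOn hx]
  exact sum_nonneg fun i _ => sub_mul_nonneg_of_mem_stdSimplexOn hx hw i

theorem dotProduct_eq_iff_of_mem_stdSimplexOn (hx : x ∈ stdSimplexOn n F)
    (hw : ∀ i ∈ F, w i ≤ a) : w ⬝ᵥ x = a ↔ ∀ i, w i ≠ a → x i = 0 := by
  rw [eq_comm, ← sub_eq_zero, sub_dotProduct_of_mem_stdSimplexOn hx,
    sum_eq_zero_iff_of_nonneg fun i _ => sub_mul_nonneg_of_mem_stdSimplexOn hx hw i]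
  simp only [mem_univ, true_imp_iff, mul_eq_zero, sub_eq_zero, or_iff_not_imp_left, ne_comm]

theorem maxFace_stdSimplexOn (w : Fin n → ℝ) (F : Finset (Fin n)) :
    maxFace (dotProductEquiv ℝ (Fin n) w) (stdSimplexOn n F) = stdSimplexOn n (argmaxOn w F) := by
  obtain rfl | hF := F.eq_empty_or_nonempty
  · have hempty : stdSimplexOn n ∅ = ∅ :=
      Set.eq_empty_of_forall_notMem fun x hx => not_nonempty_empty (nonempty_of_mem_stdSimplexOn hx)
    ext x
    simp [argmaxOn, mem_maxFace, hempty]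
  obtain ⟨m, hm⟩ := argmaxOn_nonempty w hF
  have hwm := (mem_argmaxOn.1 hm).2
  ext x
  constructor
  · rintro ⟨hx, hmax⟩
    have hxm : w ⬝ᵥ x = w m := (dotProduct_le_of_mem_stdSimplexOn hx hwm).antisymm <| by
      simpa using hmax _ (single_mem_stdSimplexOn_iff.2 (mem_argmaxOn.1 hm).1)
    refine ⟨hx.1, fun i hi => ?_, hx.2.2⟩
    by_cases hiF : i ∈ F
    · refine (dotProduct_eq_iff_of_mem_stdSimplexOn hx hwm).1 hxm i fun him => hi ?_
      exact mem_argmaxOn.2 ⟨hiF, him ▸ hwm⟩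
    · exact hx.2.1 i hiF
  · intro hx
    have hxF := stdSimplexOn_mono (argmaxOn_subset w F) hx
    have hxm : w ⬝ᵥ x = w m := by
      refine (dotProduct_eq_iff_of_mem_stdSimplexOn hxF hwm).2 fun i hi => hx.2.1 i fun hiF => hi ?_
      exact (hwm i (mem_argmaxOn.1 hiF).1).antisymm ((mem_argmaxOn.1 hiF).2 m (mem_argmaxOn.1 hm).1)
    exact ⟨hxF, fun y hy => (dotProduct_le_of_mem_stdSimplexOn hy hwm).trans_eq hxm.symm⟩

end SimplexFaces

section TruncatedOrder

variable {ι α β : Type*} [Fintype ι] [LinearOrder α] [LinearOrder β]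

/-- The order that a weight induces on its index set, truncated to the elements that are maximal in
some `k`-element set: for `2 ≤ k`, `TruncLE k w x y` says that some `k`-element set contains `x` and
attains its maximal weight at `y`. -/
def TruncLE (k : ℕ) (w : ι → α) (x y : ι) : Prop :=
  w x ≤ w y ∧ k ≤ #{z | w z ≤ w y}

theorem truncLE_iff_exists {k : ℕ} (hk : 2 ≤ k) {w : ι → α} {x y : ι} :
    TruncLE k w x y ↔ ∃ F : Finset ι, #F = k ∧ x ∈ F ∧ y ∈ argmaxOn w F := by
  classical
  constructor
  · rintro ⟨hxy, hcard⟩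
    have hpair : ({x, y} : Finset ι) ⊆ ({z | w z ≤ w y} : Finset ι) := by
      simp [insert_subset_iff, hxy]
    obtain ⟨F, hxyF, hFy, hF⟩ := exists_subsuperset_card_eq hpair (card_le_two.trans hk) hcard
    refine ⟨F, hF, hxyF (by simp), mem_argmaxOn.2 ⟨hxyF (by simp), fun z hz => ?_⟩⟩
    exact (mem_filter.1 (hFy hz)).2
  · rintro ⟨F, rfl, hx, hy⟩
    have hmax := (mem_argmaxOn.1 hy).2
    exact ⟨hmax x hx, card_le_card fun z hz => mem_filter.2 ⟨mem_univ z, hmax z hz⟩⟩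

theorem mem_argmaxOn_iff_truncLE {k : ℕ} {w : ι → α} {F : Finset ι} (hF : k ≤ #F) {y : ι} :
    y ∈ argmaxOn w F ↔ y ∈ F ∧ ∀ x ∈ F, TruncLE k w x y := by
  rw [mem_argmaxOn]
  refine and_congr_right fun _ => ⟨fun hmax x hx => ⟨hmax x hx, ?_⟩, fun h x hx => (h x hx).1⟩
  exact hF.trans (card_le_card fun z hz => mem_filter.2 ⟨mem_univ z, hmax z hz⟩)

theorem argmaxOn_eq_iff_truncLE_iff {k : ℕ} (hk : 2 ≤ k) {w : ι → α} {v : ι → β} :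
    (∀ F : Finset ι, #F = k → argmaxOn w F = argmaxOn v F) ↔
      ∀ x y, TruncLE k w x y ↔ TruncLE k v x y := by
  constructor
  · intro h x y
    rw [truncLE_iff_exists hk, truncLE_iff_exists hk]
    exact exists_congr fun F => and_congr_right fun hF => by rw [h F hF]
  · intro h F hF
    ext y
    simp only [mem_argmaxOn_iff_truncLE hF.ge, h]

/-- A level function `r` that is zero on fewer than `k` elements and at most one on at least `k`
elements, and whose positive levels are exactly `1, …, m`. These are the canonical representatives
of the truncated orders `TruncLE k w`. -/
structure IsTruncatedRanking (k m : ℕ) (r : ι → ℕ) : Prop where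
  card_eq_zero_lt : #{x | r x = 0} < k
  le_card_le_one : k ≤ #{x | r x ≤ 1}
  mem_range_iff : ∀ c ≠ 0, c ∈ Set.range r ↔ c ≤ m

namespace IsTruncatedRanking

variable {k m m' : ℕ} {r r' : ι → ℕ}

theorem truncLE_iff (hr : IsTruncatedRanking k m r) {x y : ι} :
    TruncLE k r x y ↔ r x ≤ r y ∧ r y ≠ 0 := by
  refine and_congr_right fun _ => ⟨fun hcard hy => ?_, fun hy => hr.le_card_le_one.trans ?_⟩
  · simp only [hy, Nat.le_zero] at hcard
    exact hcard.not_gt hr.card_eq_zero_lt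
  · exact card_le_card (monotone_filter_right _ fun z _ hz => by grind)

theorem le_of_truncLE_iff (hr : IsTruncatedRanking k m r) (hr' : IsTruncatedRanking k m' r')
    (h : ∀ x y, TruncLE k r x y ↔ TruncLE k r' x y) (x : ι) : r x ≤ r' x := by
  simp only [hr.truncLE_iff, hr'.truncLE_iff] at h
  induction hc : r x generalizing x with
  | zero => exact Nat.zero_le _
  | succ c ih =>
    have hx' : r' x ≠ 0 := ((h x x).1 ⟨le_rfl, by omega⟩).2
    rcases eq_or_ne c 0 with rfl | hc0
    · exact Nat.one_le_iff_ne_zero.2 hx'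
    have hcm : c + 1 ≤ m := (hr.mem_range_iff _ c.succ_ne_zero).1 ⟨x, hc⟩
    obtain ⟨y, hy⟩ := (hr.mem_range_iff c hc0).2 (Nat.le_of_succ_le hcm)
    have hcy : c ≤ r' y := ih y hy
    have hyx : r' y < r' x := by
      by_contra! hxy
      have := ((h x y).2 ⟨hxy, by omega⟩).1
      omega
    omega

theorem eq_of_truncLE_iff (hr : IsTruncatedRanking k m r) (hr' : IsTruncatedRanking k m' r')
    (h : ∀ x y, TruncLE k r x y ↔ TruncLE k r' x y) : r = r' :=
  funext fun x => (hr.le_of_truncLE_iff hr' h x).antisymm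
    (hr'.le_of_truncLE_iff hr (fun y z => (h y z).symm) x)

theorem one_le (hr : IsTruncatedRanking k m r) : 1 ≤ m := by
  have hlt : #{x | r x = 0} < #{x | r x ≤ 1} := hr.card_eq_zero_lt.trans_le hr.le_card_le_one
  obtain ⟨x, hx1, hx0⟩ := exists_mem_notMem_of_card_lt_card hlt
  refine (hr.mem_range_iff 1 one_ne_zero).1 ⟨x, ?_⟩
  simp only [mem_filter_univ] at hx1 hx0
  omega

theorem le (hr : IsTruncatedRanking k m r) (x : ι) : r x ≤ m := by
  rcases eq_or_ne (r x) 0 with hx | hx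
  · exact hx ▸ Nat.zero_le m
  · exact (hr.mem_range_iff _ hx).1 ⟨x, rfl⟩

end IsTruncatedRanking

theorem card_filter_le_lt_card_filter_le (V : Finset α) {s t : α} (ht : t ∈ V) (hst : s < t) :
    #{v ∈ V | v ≤ s} < #{v ∈ V | v ≤ t} := by
  refine card_lt_card ((ssubset_iff_of_subset ?_).2 ⟨t, by simp [ht], by simp [hst]⟩)
  exact monotone_filter_right V fun v _ hv => hv.trans hst.le

theorem image_card_filter_le (V : Finset α) :
    V.image (fun t => #{v ∈ V | v ≤ t}) = Icc 1 #V := by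
  refine eq_of_subset_of_card_le (image_subset_iff.2 fun t ht => ?_) ?_
  · exact mem_Icc.2 ⟨card_pos.2 ⟨t, by simp [ht]⟩, card_filter_le V _⟩
  · have hmono : StrictMonoOn (fun t => #{v ∈ V | v ≤ t}) V :=
      fun s _ t ht hst => card_filter_le_lt_card_filter_le V ht hst
    rw [card_image_of_injOn hmono.injOn, Nat.card_Icc, Nat.add_sub_cancel]

theorem card_filter_card_le_lt (w : ι → α) {k : ℕ} (hk : 0 < k) :
    #{x | #{z | w z ≤ w x} < k} < k := by
  obtain hempty | hne := ({x | #{z | w z ≤ w x} < k} : Finset ι).eq_empty_or_nonempty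
  · rwa [hempty, card_empty]
  obtain ⟨x, hx, hmax⟩ := exists_max_image _ w hne
  refine lt_of_le_of_lt (card_le_card fun z hz => ?_) (mem_filter.1 hx).2
  exact mem_filter.2 ⟨mem_univ z, hmax z hz⟩

/-- The values that `w` takes at elements which are maximal in some `k`-element set. -/
def truncValues (k : ℕ) (w : ι → α) : Finset α :=
  ({x | k ≤ #{z | w z ≤ w x}} : Finset ι).image w

theorem mem_truncValues {k : ℕ} {w : ι → α} {x : ι} :
    w x ∈ truncValues k w ↔ k ≤ #{z | w z ≤ w x} := by
  simp only [truncValues, mem_image, mem_filter_univ]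
  exact ⟨fun ⟨_, hy, hyx⟩ => hyx ▸ hy, fun hx => ⟨x, hx, rfl⟩⟩

/-- The canonical level function of the truncated order of `w`: the rank of `w x` among the values
in `truncValues k w`. -/
def truncRank (k : ℕ) (w : ι → α) (x : ι) : ℕ :=
  #{v ∈ truncValues k w | v ≤ w x}

theorem truncRank_mono {k : ℕ} {w : ι → α} {x y : ι} (hxy : w x ≤ w y) :
    truncRank k w x ≤ truncRank k w y :=
  card_le_card (monotone_filter_right _ fun _ _ hv => hv.trans hxy)

theorem le_card_filter_le_of_le {k : ℕ} {w : ι → α} {x y : ι} (hx : k ≤ #{z | w z ≤ w x})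
    (hxy : w x ≤ w y) : k ≤ #{z | w z ≤ w y} :=
  hx.trans (card_le_card (monotone_filter_right _ fun _ _ hz => hz.trans hxy))

theorem truncRank_ne_zero_iff {k : ℕ} {w : ι → α} {x : ι} :
    truncRank k w x ≠ 0 ↔ k ≤ #{z | w z ≤ w x} := by
  rw [truncRank, card_ne_zero]
  constructor
  · rintro ⟨v, hv⟩
    obtain ⟨hvV, hvx⟩ := mem_filter.1 hv
    obtain ⟨y, hy, rfl⟩ := mem_image.1 hvV
    exact le_card_filter_le_of_le (mem_filter.1 hy).2 hvx
  · exact fun hx => ⟨w x, mem_filter.2 ⟨mem_truncValues.2 hx, le_rfl⟩⟩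

theorem truncRank_le_iff {k : ℕ} {w : ι → α} {x y : ι} (hy : k ≤ #{z | w z ≤ w y}) :
    truncRank k w x ≤ truncRank k w y ↔ w x ≤ w y := by
  refine ⟨fun h => ?_, truncRank_mono⟩
  contrapose! h
  exact card_filter_le_lt_card_filter_le _
    (mem_truncValues.2 (le_card_filter_le_of_le hy h.le)) h

theorem mem_range_truncRank_iff {k c : ℕ} {w : ι → α} (hc : c ≠ 0) :
    c ∈ Set.range (truncRank k w) ↔ c ≤ #(truncValues k w) := by
  constructor
  · rintro ⟨x, rfl⟩
    exact card_filter_le _ _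
  · intro hcV
    have hcI : c ∈ Icc 1 #(truncValues k w) := mem_Icc.2 ⟨Nat.one_le_iff_ne_zero.2 hc, hcV⟩
    rw [← image_card_filter_le] at hcI
    obtain ⟨v, hv, rfl⟩ := mem_image.1 hcI
    obtain ⟨x, -, rfl⟩ := mem_image.1 hv
    exact ⟨x, rfl⟩

theorem isTruncatedRanking_truncRank {k : ℕ} (hk : 0 < k) (hcard : k ≤ Fintype.card ι)
    (w : ι → α) : IsTruncatedRanking k #(truncValues k w) (truncRank k w) where
  card_eq_zero_lt := by
    have hzero (x : ι) : truncRank k w x = 0 ↔ #{z | w z ≤ w x} < k := by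
      rw [← not_le, ← truncRank_ne_zero_iff, not_not]
    simpa only [hzero] using card_filter_card_le_lt w hk
  le_card_le_one := by
    have : Nonempty ι := Fintype.card_pos_iff.1 (hk.trans_le hcard)
    obtain ⟨x, hmax⟩ := Finite.exists_max w
    have hx : truncRank k w x ≠ 0 := truncRank_ne_zero_iff.2 (by simpa [hmax] using hcard)
    have hV : 1 ≤ #(truncValues k w) :=
      (Nat.one_le_iff_ne_zero.2 hx).trans ((mem_range_truncRank_iff hx).1 ⟨x, rfl⟩)
    obtain ⟨y, hy⟩ := (mem_range_truncRank_iff one_ne_zero).2 hV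
    have hky : k ≤ #{z | w z ≤ w y} := truncRank_ne_zero_iff.1 (by omega)
    exact hky.trans (card_le_card (monotone_filter_right _ fun z _ hz => hy ▸ truncRank_mono hz))
  mem_range_iff c hc := mem_range_truncRank_iff hc

theorem truncLE_truncRank_iff {k : ℕ} (hk : 0 < k) (hcard : k ≤ Fintype.card ι) {w : ι → α}
    {x y : ι} : TruncLE k (truncRank k w) x y ↔ TruncLE k w x y := by
  rw [(isTruncatedRanking_truncRank hk hcard w).truncLE_iff, truncRank_ne_zero_iff, TruncLE,
    and_congr_left_iff]
  exact truncRank_le_iff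

end TruncatedOrder

section Dimension

theorem maxFace_zero {E R : Type*} [AddCommMonoid E] [AddCommMonoid R] [PartialOrder R]
    [IsOrderedCancelAddMonoid R] (P : Set E) : maxFace (0 : E →+ R) P = P :=
  maxFace_eq_self_iff.2 fun _ _ _ _ => rfl

theorem maxFace_sum_eq_self_iff {E R F κ : Type*} [AddCommMonoid E] [AddCommMonoid R]
    [PartialOrder R] [IsOrderedCancelAddMonoid R] [FunLike F E R] [AddMonoidHomClass F E R]
    {f : F} {s : Finset κ} {P : κ → Set E} (hf : ∀ i ∈ s, (maxFace f (P i)).Nonempty) :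
    maxFace f (∑ i ∈ s, P i) = ∑ i ∈ s, P i ↔ ∀ i ∈ s, maxFace f (P i) = P i := by
  have hP : ∀ i ∈ s, (maxFace (0 : E →+ R) (P i)).Nonempty := fun i hi => by
    rw [maxFace_zero]
    exact (hf i hi).mono fun x hx => hx.1
  simpa only [maxFace_zero] using maxFace_sum_eq_iff hf hP

theorem mem_dualAnnihilator_vectorSpan_iff {K V : Type*} [CommRing K] [PartialOrder K]
    [IsOrderedRing K] [AddCommGroup V] [Module K V] {S : Set V} {L : Module.Dual K V} :
    L ∈ (vectorSpan K S).dualAnnihilator ↔ maxFace L S = S := by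
  rw [← SetLike.mem_coe, vectorSpan_def, Submodule.coe_dualAnnihilator_span, maxFace_eq_self_iff]
  simp only [Set.mem_ofPred_eq, Set.vsub_subset_iff, SetLike.mem_coe, LinearMap.mem_ker, map_sub,
    vsub_eq_sub, sub_eq_zero]

theorem finrank_range_funLeft (K : Type*) [Ring K] [StrongRankCondition K] {ι κ : Type*}
    [Fintype ι] [DecidableEq κ] (q : ι → κ) :
    Module.finrank K (LinearMap.range (LinearMap.funLeft K K q)) = #(univ.image q) := by
  have hcomp : LinearMap.funLeft K K q = LinearMap.funLeft K K (Set.rangeFactorization q) ∘ₗ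
      LinearMap.funLeft K K ((↑) : Set.range q → κ) := rfl
  rw [hcomp, LinearMap.range_comp_of_range_eq_top _ (LinearMap.range_eq_top.2
      (LinearMap.funLeft_surjective_of_injective K K _ Subtype.val_injective)),
    LinearMap.finrank_range_of_inj (LinearMap.funLeft_injective_of_surjective K K _
      Set.rangeFactorization_surjective),
    Module.finrank_fintype_fun_eq_card, ← Nat.card_eq_fintype_card, Nat.card_coe_set_eq,
    ← Set.ncard_coe_finset, coe_image, coe_univ, Set.image_univ]

theorem setDim_add_finrank {n : ℕ} {S : Set (Fin n → ℝ)} {W : Submodule ℝ (Fin n → ℝ)}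
    (hW : ∀ w, w ∈ W ↔ maxFace (dotProductEquiv ℝ (Fin n) w) S = S) :
    setDim S + Module.finrank ℝ W = n := by
  have hmap : W.map (dotProductEquiv ℝ (Fin n)).toLinearMap =
      (vectorSpan ℝ S).dualAnnihilator := by
    ext L
    obtain ⟨w, rfl⟩ := (dotProductEquiv ℝ (Fin n)).surjective L
    rw [mem_dualAnnihilator_vectorSpan_iff, ← hW]
    simp
  rw [setDim, direction_affineSpan, ← LinearEquiv.finrank_map_eq (dotProductEquiv ℝ (Fin n)) W,
    hmap, Subspace.finrank_add_finrank_dualAnnihilator_eq, Module.finrank_fin_fun]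

end Dimension

section PermutahedronFaces

variable {n k : ℕ}

/-- The face of the general permutahedron on which the linear functional with coefficient vector `w`
attains its maximum. -/
def genPermFace (n k : ℕ) (w : Fin n → ℝ) : Set (Fin n → ℝ) :=
  maxFace (dotProductEquiv ℝ (Fin n) w) (genPerm n k)

theorem argmaxOn_nonempty_of_mem_powersetCard {α : Type*} [LinearOrder α] (hk : 0 < k)
    (w : Fin n → α) {F : Finset (Fin n)} (hF : F ∈ univ.powersetCard k) :
    (argmaxOn w F).Nonempty :=
  argmaxOn_nonempty w (card_pos.1 (hk.trans_eq (mem_powersetCard_univ.1 hF).symm))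

theorem maxFace_stdSimplexOn_nonempty (hk : 0 < k) (w : Fin n → ℝ) {F : Finset (Fin n)}
    (hF : F ∈ univ.powersetCard k) :
    (maxFace (dotProductEquiv ℝ (Fin n) w) (stdSimplexOn n F)).Nonempty := by
  rw [maxFace_stdSimplexOn]
  exact stdSimplexOn_nonempty (argmaxOn_nonempty_of_mem_powersetCard hk w hF)

theorem genPermFace_eq_sum (w : Fin n → ℝ) :
    genPermFace n k w = ∑ F ∈ univ.powersetCard k, stdSimplexOn n (argmaxOn w F) := by
  simp only [genPermFace, genPerm, map_sum, maxFace_stdSimplexOn]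

theorem genPermFace_nonempty (hk : 0 < k) (w : Fin n → ℝ) : (genPermFace n k w).Nonempty := by
  rw [genPermFace, genPerm, map_sum]
  exact sum_nonempty_of_forall fun F => maxFace_stdSimplexOn_nonempty hk w

theorem isExpFace_genPerm_iff (hk : 0 < k) {A : Set (Fin n → ℝ)} :
    IsExpFace (genPerm n k) A ↔ ∃ w, A = genPermFace n k w := by
  constructor
  · rintro ⟨-, L, rfl⟩
    obtain ⟨w, rfl⟩ := (dotProductEquiv ℝ (Fin n)).surjective L
    exact ⟨w, rfl⟩
  · rintro ⟨w, rfl⟩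
    exact ⟨genPermFace_nonempty hk w, _, rfl⟩

theorem genPermFace_eq_iff (hk : 2 ≤ k) {w v : Fin n → ℝ} :
    genPermFace n k w = genPermFace n k v ↔ ∀ x y, TruncLE k w x y ↔ TruncLE k v x y := by
  have hk0 : 0 < k := by omega
  rw [genPermFace, genPermFace, genPerm,
    maxFace_sum_eq_iff (fun F hF => maxFace_stdSimplexOn_nonempty hk0 w hF)
      (fun F hF => maxFace_stdSimplexOn_nonempty hk0 v hF), ← argmaxOn_eq_iff_truncLE_iff hk]
  simp only [maxFace_stdSimplexOn, stdSimplexOn_inj, mem_powersetCard_univ]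

theorem maxFace_genPermFace_eq_self_iff (hk : 2 ≤ k) {w v : Fin n → ℝ} :
    maxFace (dotProductEquiv ℝ (Fin n) w) (genPermFace n k v) = genPermFace n k v ↔
      ∀ x y, TruncLE k v x y → TruncLE k v y x → w x = w y := by
  have hk0 : 0 < k := by omega
  have hne : ∀ F ∈ univ.powersetCard k, (maxFace (dotProductEquiv ℝ (Fin n) w)
      (stdSimplexOn n (argmaxOn v F))).Nonempty := fun F hF => by
    rw [maxFace_stdSimplexOn]
    exact stdSimplexOn_nonempty
      (argmaxOn_nonempty w (argmaxOn_nonempty_of_mem_powersetCard hk0 v hF))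
  rw [genPermFace_eq_sum, maxFace_sum_eq_self_iff hne]
  simp only [maxFace_stdSimplexOn, stdSimplexOn_inj, argmaxOn_eq_self_iff, mem_powersetCard_univ]
  constructor
  · intro h x y hxy hyx
    obtain ⟨F, hF, hx, hy⟩ := (truncLE_iff_exists hk).1 hxy
    refine h F hF x (mem_argmaxOn.2 ⟨hx, fun z hz => ?_⟩) y hy
    exact ((mem_argmaxOn.1 hy).2 z hz).trans hyx.1
  · intro h F hF x hx y hy
    have hxy := ((mem_argmaxOn_iff_truncLE hF.ge).1 hy).2 x (argmaxOn_subset v F hx)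
    have hyx := ((mem_argmaxOn_iff_truncLE hF.ge).1 hx).2 y (argmaxOn_subset v F hy)
    exact h x y hxy hyx

end PermutahedronFaces

section RankingFaces

theorem truncLE_natCast_iff {ι : Type*} [Fintype ι] {k : ℕ} {r : ι → ℕ} {x y : ι} :
    TruncLE k (fun z => (r z : ℝ)) x y ↔ TruncLE k r x y := by
  simp only [TruncLE, Nat.cast_le]

/-- The partition into the level sets of `r` at positive levels and the singletons at level zero,
encoded by its quotient map. -/
def levelClass {ι : Type*} (r : ι → ℕ) (x : ι) : ι ⊕ ℕ :=
  if r x = 0 then Sum.inl x else Sum.inr (r x)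

theorem levelClass_eq_iff {ι : Type*} {r : ι → ℕ} {x y : ι} :
    levelClass r x = levelClass r y ↔ x = y ∨ r x = r y ∧ r x ≠ 0 := by
  grind [levelClass]

theorem IsTruncatedRanking.image_levelClass {ι : Type*} [Fintype ι] [DecidableEq ι] {k m : ℕ}
    {r : ι → ℕ} (hr : IsTruncatedRanking k m r) :
    univ.image (levelClass r) = ({x | r x = 0} : Finset ι).disjSum (Icc 1 m) := by
  ext (x | c)
  · simp [levelClass, ite_eq_iff]
  · have hrange := hr.mem_range_iff c
    simp only [levelClass, Set.mem_range, mem_image, mem_univ, true_and, ite_eq_iff, reduceCtorEq,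
      and_false, false_or, Sum.inr.injEq, inr_mem_disjSum, mem_Icc] at hrange ⊢
    grind

theorem IsTruncatedRanking.card_add_setDim {n k m : ℕ} {r : Fin n → ℕ}
    (hr : IsTruncatedRanking k m r) (hk : 2 ≤ k) :
    #{x | r x = 0} + m + setDim (genPermFace n k fun x => (r x : ℝ)) = n := by
  have hW (w : Fin n → ℝ) : w ∈ LinearMap.range (LinearMap.funLeft ℝ ℝ (levelClass r)) ↔
      maxFace (dotProductEquiv ℝ (Fin n) w) (genPermFace n k fun x => (r x : ℝ)) =
        genPermFace n k fun x => (r x : ℝ) := by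
    have hfactor : w ∈ LinearMap.range (LinearMap.funLeft ℝ ℝ (levelClass r)) ↔
        w.FactorsThrough (levelClass r) := by
      simp only [Function.factorsThrough_iff, LinearMap.mem_range, LinearMap.funLeft, eq_comm]
      rfl
    rw [hfactor, maxFace_genPermFace_eq_self_iff hk]
    simp only [truncLE_natCast_iff, hr.truncLE_iff, Function.FactorsThrough, levelClass_eq_iff]
    grind
  have hdim := setDim_add_finrank hW
  rw [finrank_range_funLeft, hr.image_levelClass, card_disjSum, Nat.card_Icc,
    Nat.add_sub_cancel] at hdim
  omega

end RankingFaces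

section Surjections

variable {α β : Type*}

theorem finite_setOf_range_subset [Finite α] (s : Finset β) :
    {f : α → β | Set.range f ⊆ s}.Finite := by
  simpa only [Set.range_subset_iff] using Set.Finite.pi' fun _ : α => s.finite_toSet

theorem insert_eq_coe_iff [DecidableEq β] {s : Finset β} {t : Set β} {b : β} (hb : b ∈ s) :
    insert b t = s ↔ t = s ∨ t = s.erase b := by
  simp only [Set.ext_iff, Set.mem_insert_iff, mem_coe, mem_erase]
  grind

theorem ncard_setOf_insert_range_eq [Finite α] [DecidableEq β] {s : Finset β} {b : β}
    (hb : b ∈ s) : {f : α → β | insert b (Set.range f) = s}.ncard =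
      {f : α → β | Set.range f = s}.ncard + {f : α → β | Set.range f = s.erase b}.ncard := by
  have hfinite (t : Finset β) : {f : α → β | Set.range f = t}.Finite :=
    (finite_setOf_range_subset t).subset fun _ => Eq.subset
  rw [← Set.ncard_union_eq _ (hfinite s) (hfinite _)]
  · congr 1
    ext f
    exact insert_eq_coe_iff hb
  · refine Set.disjoint_left.2 fun f hf hf' => notMem_erase b s ?_
    rwa [coe_inj.1 (hf'.symm.trans hf)]

theorem ncard_setOf_range_option_eq [Finite α] (s : Finset β) :
    {f : Option α → β | Set.range f = s}.ncard =
      ∑ b ∈ s, {f : α → β | insert b (Set.range f) = s}.ncard := by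
  have hfinite (b : s) : Finite {f : α → β | insert (b : β) (Set.range f) = s} :=
    (finite_setOf_range_subset s).subset fun _ hf => hf ▸ Set.subset_insert _ _
  let e : {f : Option α → β | Set.range f = s} ≃
      Σ b : s, {f : α → β | insert (b : β) (Set.range f) = s} :=
    { toFun f := ⟨⟨f.1 none, mem_coe.1 (f.2.subset (Set.mem_range_self none))⟩,
        ⟨f.1 ∘ some, (Option.range_eq f.1).symm.trans f.2⟩⟩
      invFun p := ⟨fun o => o.elim p.1 p.2.1, (Option.range_eq _).trans p.2.2⟩
      left_inv f := Subtype.ext (funext fun o => by cases o <;> rfl)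
      right_inv p := rfl }
  rw [← Nat.card_coe_set_eq, Nat.card_congr e, Nat.card_sigma]
  simp only [Nat.card_coe_set_eq]
  exact sum_coe_sort s fun b => {f : α → β | insert b (Set.range f) = s}.ncard

theorem ncard_setOf_range_eq [Finite α] (s : Finset β) :
    {f : α → β | Set.range f = s}.ncard = stirling2 (Nat.card α) #s * (#s).factorial := by
  classical
  induction α using Finite.induction_empty_option generalizing s with
  | @of_equiv α₁ α₂ e ih =>
    rw [← Nat.card_congr e, ← ih]
    refine Set.ncard_congr' ((e.symm.arrowCongr (Equiv.refl β)).subtypeEquiv fun f => ?_)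
    rw [Set.mem_ofPred_eq, ← e.surjective.range_comp f]
    rfl
  | h_empty =>
    simp only [Set.range_eq_empty]
    obtain rfl | hs := s.eq_empty_or_nonempty
    · simp [stirling2]
    · obtain ⟨c, hc⟩ := Nat.exists_eq_succ_of_ne_zero hs.card_ne_zero
      simp [stirling2, hc, eq_comm (a := (∅ : Set β)), hs.ne_empty]
  | @h_option α _ ih =>
    rw [ncard_setOf_range_option_eq, sum_congr rfl fun b hb => ncard_setOf_insert_range_eq hb,
      Finite.card_option]
    have herase (b : β) (hb : b ∈ s) : {f : α → β | Set.range f = s}.ncard +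
        {f : α → β | Set.range f = s.erase b}.ncard =
        stirling2 (Nat.card α) #s * (#s).factorial +
          stirling2 (Nat.card α) (#s - 1) * (#s - 1).factorial := by
      rw [ih, ih, card_erase_of_mem hb]
    rw [sum_congr rfl herase, sum_const, smul_eq_mul]
    cases #s with
    | zero => simp [stirling2]
    | succ c =>
      rw [stirling2, Nat.add_sub_cancel, Nat.factorial_succ]
      ring

theorem ncard_setOf_eqOn_image_compl_eq (f₀ : α → β) (s : Set α) (t : Set β) :
    {f : α → β | Set.EqOn f f₀ s ∧ f '' sᶜ = t}.ncard =
      {g : ↥sᶜ → β | Set.range g = t}.ncard := by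
  classical
  refine Set.ncard_congr (fun f _ => sᶜ.domRestrict f) ?_ ?_ ?_
  · exact fun f hf => (Set.range_domRestrict f sᶜ).trans hf.2
  · intro f g hf hg hfg
    ext x
    by_cases hx : x ∈ s
    · exact (hf.1 hx).trans (hg.1 hx).symm
    · exact congrFun hfg ⟨x, hx⟩
  · intro g hg
    have hrestrict : sᶜ.domRestrict (fun x => if hx : x ∈ sᶜ then g ⟨x, hx⟩ else f₀ x) = g :=
      funext fun x => dif_pos x.2
    refine ⟨_, ⟨fun x hx => dif_neg (not_not.2 hx), ?_⟩, hrestrict⟩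
    rw [← Set.range_domRestrict, hrestrict]
    exact hg

end Surjections

section RankingCount

variable {ι : Type*} [Fintype ι]

theorem sum_disjoint_card [DecidableEq ι] {M : Type*} [Semiring M] (G : ℕ → ℕ → M) :
    ∑ A : Finset ι, ∑ B : Finset ι, (if Disjoint A B then G #A #B else 0) =
      ∑ i ∈ range (Fintype.card ι + 1), ∑ j ∈ range (Fintype.card ι + 1),
        (Fintype.card ι).choose i * (Fintype.card ι - i).choose j * G i j := by
  have hinner (A : Finset ι) : ∑ B : Finset ι, (if Disjoint A B then G #A #B else 0) =
      ∑ j ∈ range (Fintype.card ι + 1), (Fintype.card ι - #A).choose j * G #A j := by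
    have hdisj : ({B | Disjoint A B} : Finset (Finset ι)) = Aᶜ.powerset := by
      ext B
      simp [subset_compl_iff_disjoint_left]
    rw [← sum_filter, hdisj, sum_powerset_apply_card, card_compl]
    simp only [nsmul_eq_mul]
    refine sum_subset (range_mono (by omega)) fun j _ hj => ?_
    rw [Nat.choose_eq_zero_of_lt (by simpa using hj), Nat.cast_zero, zero_mul]
  simp only [hinner]
  rw [← powerset_univ, sum_powerset_apply_card fun i => ∑ j ∈ range (Fintype.card ι + 1),
    ((Fintype.card ι - i).choose j * G i j : M), card_univ]
  simp only [nsmul_eq_mul, mul_sum, mul_assoc]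

theorem card_filter_le_one (r : ι → ℕ) : #{x | r x ≤ 1} = #{x | r x = 0} + #{x | r x = 1} := by
  have hdisj : Disjoint ({x | r x = 0} : Finset ι) ({x | r x = 1} : Finset ι) :=
    disjoint_filter.2 fun x _ h0 h1 => zero_ne_one (h0.symm.trans h1)
  rw [← card_disjUnion _ _ hdisj]
  congr 1
  ext x
  simp only [mem_filter_univ, mem_disjUnion, Nat.le_one_iff_eq_zero_or_eq_one]

theorem isTruncatedRanking_iff_eqOn {k m : ℕ} {A B : Finset ι} (hAB : Disjoint A B)
    (hA : #A < k) (hk : k ≤ #A + #B) (hm : 1 ≤ m) {r : ι → ℕ} :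
    (IsTruncatedRanking k m r ∧ ({x | r x = 0} : Finset ι) = A ∧ ({x | r x = 1} : Finset ι) = B) ↔
      Set.EqOn r ((A : Set ι)ᶜ.indicator 1) (A ∪ B) ∧ r '' (A ∪ B)ᶜ = Icc 2 m := by
  constructor
  · rintro ⟨hr, rfl, rfl⟩
    refine ⟨fun x hx => ?_, ?_⟩
    · rcases hx with hx | hx <;> simp_all
    · ext c
      have hrange := hr.mem_range_iff c
      simp only [Set.mem_range, Set.mem_image, Set.mem_compl_iff, Set.mem_union, mem_coe,
        mem_filter_univ, mem_Icc] at hrange ⊢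
      grind
  · rintro ⟨hAB', himage⟩
    have hA0 : ∀ x ∈ A, r x = 0 := fun x hx => by simpa [hx] using hAB' (Or.inl hx)
    have hB1 : ∀ x ∈ B, r x = 1 := fun x hx => by
      simpa [disjoint_right.1 hAB hx] using hAB' (Or.inr hx)
    have hC (x : ι) : x ∈ A ∨ x ∈ B ∨ 2 ≤ r x ∧ r x ≤ m := by
      by_contra! hx
      have hxm := mem_Icc.1 (himage.subset ⟨x, not_or.2 ⟨hx.1, hx.2.1⟩, rfl⟩)
      exact (hx.2.2 hxm.1).not_ge hxm.2
    have hzero : ({x | r x = 0} : Finset ι) = A := by ext x; grind [hC x]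
    have hone : ({x | r x = 1} : Finset ι) = B := by ext x; grind [hC x]
    refine ⟨⟨hzero ▸ hA, by rwa [card_filter_le_one, hzero, hone], fun c hc => ?_⟩, hzero, hone⟩
    constructor
    · rintro ⟨x, rfl⟩
      grind [hC x]
    · intro hcm
      obtain rfl | hc2 : c = 1 ∨ 2 ≤ c := by omega
      · obtain ⟨x, hx⟩ : B.Nonempty := card_pos.1 (by omega)
        exact ⟨x, hB1 x hx⟩
      · exact Set.image_subset_range _ _ (himage.superset (mem_Icc.2 ⟨hc2, hcm⟩))

theorem ncard_isTruncatedRanking {k m : ℕ} {A B : Finset ι} (hAB : Disjoint A B)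
    (hA : #A < k) (hk : k ≤ #A + #B) (hm : 1 ≤ m) :
    {r : ι → ℕ | IsTruncatedRanking k m r ∧
      ({x | r x = 0} : Finset ι) = A ∧ ({x | r x = 1} : Finset ι) = B}.ncard =
      stirling2 (Fintype.card ι - #A - #B) (m - 1) * (m - 1).factorial := by
  classical
  have hcard : Nat.card ↥(A ∪ B : Set ι)ᶜ = Fintype.card ι - #A - #B := by
    rw [Nat.card_coe_set_eq, ← coe_union, ← coe_compl, Set.ncard_coe_finset, card_compl,
      card_union_of_disjoint hAB, Nat.sub_add_eq]
  have hIcc : #(Icc 2 m) = m - 1 := by rw [Nat.card_Icc]; omega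
  simp only [isTruncatedRanking_iff_eqOn hAB hA hk hm]
  rw [ncard_setOf_eqOn_image_compl_eq, ncard_setOf_range_eq, hcard, hIcc]

/-- The number of `k`-truncated rankings `r` of an `n`-element set with `i` prescribed
elements at level zero, `j` prescribed elements at level one, and top level `n - i - d`. -/
def truncatedRankingCount (n k d i j : ℕ) : ℕ :=
  if i < k ∧ k ≤ i + j ∧ d + i + 1 ≤ n then
    stirling2 (n - i - j) (n - i - d - 1) * (n - i - d - 1).factorial
  else 0

/-- The truncated rankings corresponding to the `d`-dimensional faces of the general permutahedron:
the elements at level zero and the positive levels together are `d` fewer than the elements. -/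
def truncatedRankings (ι : Type*) [Fintype ι] (k d : ℕ) : Set (ι → ℕ) :=
  {r | ∃ m, IsTruncatedRanking k m r ∧ #{x | r x = 0} + m + d = Fintype.card ι}

theorem finite_truncatedRankings (k d : ℕ) : (truncatedRankings ι k d).Finite := by
  refine (finite_setOf_range_subset (Iic (Fintype.card ι))).subset ?_
  rintro r ⟨m, hr, hm⟩ _ ⟨x, rfl⟩
  have hx := hr.le x
  simp only [coe_Iic, Set.mem_Iic]
  omega

theorem ncard_truncatedRankings_fiber [DecidableEq ι] (k d : ℕ) (A B : Finset ι) :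
    {r ∈ truncatedRankings ι k d |
      ({x | r x = 0} : Finset ι) = A ∧ ({x | r x = 1} : Finset ι) = B}.ncard =
      if Disjoint A B then truncatedRankingCount (Fintype.card ι) k d #A #B else 0 := by
  rw [truncatedRankingCount, ← ite_and]
  split_ifs with h
  · obtain ⟨hAB, hA, hk, hd⟩ := h
    rw [← ncard_isTruncatedRanking hAB hA hk (by omega)]
    congr 1
    ext r
    refine and_congr_left fun hr => ⟨?_, fun h => ⟨_, h, by grind⟩⟩
    rintro ⟨m, h, hm⟩
    rwa [← hr.1, show Fintype.card ι - _ - d = m by omega]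
  · rw [Set.ncard_eq_zero ((finite_truncatedRankings k d).subset fun _ hr => hr.1)]
    refine Set.eq_empty_of_forall_notMem ?_
    rintro r ⟨⟨m, hr, hm⟩, rfl, rfl⟩
    have hAB : Disjoint ({x | r x = 0} : Finset ι) ({x | r x = 1} : Finset ι) :=
      disjoint_filter.2 fun x _ h0 h1 => zero_ne_one (h0.symm.trans h1)
    have hcard := hr.le_card_le_one
    rw [card_filter_le_one] at hcard
    have hm1 := hr.one_le
    exact h ⟨hAB, hr.card_eq_zero_lt, hcard, by omega⟩

theorem ncard_eq_sum_ncard_fiber {α β : Type*} [Fintype β] {S : Set α} (hS : S.Finite)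
    (f : α → β) : S.ncard = ∑ b, {a ∈ S | f a = b}.ncard := by
  classical
  lift S to Finset α using hS
  rw [Set.ncard_coe_finset, card_eq_sum_card_fiberwise fun a _ => mem_coe.2 (mem_univ (f a))]
  refine sum_congr rfl fun b _ => ?_
  rw [← Set.ncard_coe_finset, coe_filter]
  rfl

theorem ncard_truncatedRankings (k d : ℕ) :
    (truncatedRankings ι k d).ncard =
      ∑ i ∈ range (Fintype.card ι + 1), ∑ j ∈ range (Fintype.card ι + 1),
        (Fintype.card ι).choose i * (Fintype.card ι - i).choose j *
          truncatedRankingCount (Fintype.card ι) k d i j := by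
  classical
  have hfiber := ncard_eq_sum_ncard_fiber (finite_truncatedRankings (ι := ι) k d)
    fun r => (({x | r x = 0} : Finset ι), ({x | r x = 1} : Finset ι))
  simp only [Prod.ext_iff, ncard_truncatedRankings_fiber] at hfiber
  rw [hfiber, Fintype.sum_prod_type]
  exact sum_disjoint_card (truncatedRankingCount (Fintype.card ι) k d)

end RankingCount

theorem card_genPerm_faces {n k : ℕ} (d : ℕ) (hk : 2 ≤ k) (hkn : k ≤ n) :
    Nat.card {A : Set (Fin n → ℝ) // IsExpFace (genPerm n k) A ∧ setDim A = d} =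
      (truncatedRankings (Fin n) k d).ncard := by
  have hk0 : 0 < k := by omega
  refine (Set.ncard_congr (fun r _ => genPermFace n k fun x => (r x : ℝ)) ?_ ?_ ?_).symm
  · rintro r ⟨m, hr, hm⟩
    refine ⟨(isExpFace_genPerm_iff hk0).2 ⟨_, rfl⟩, ?_⟩
    have hdim := hr.card_add_setDim hk
    rw [Fintype.card_fin] at hm
    omega
  · rintro r r' ⟨m, hr, -⟩ ⟨m', hr', -⟩ h
    refine hr.eq_of_truncLE_iff hr' ?_
    simpa only [truncLE_natCast_iff] using (genPermFace_eq_iff hk).1 h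
  · rintro A ⟨hA, rfl⟩
    obtain ⟨w, rfl⟩ := (isExpFace_genPerm_iff hk0).1 hA
    have hcard : k ≤ Fintype.card (Fin n) := by rwa [Fintype.card_fin]
    have hr := isTruncatedRanking_truncRank hk0 hcard w
    have hface : (genPermFace n k fun x => (truncRank k w x : ℝ)) = genPermFace n k w := by
      simp only [genPermFace_eq_iff hk, truncLE_natCast_iff, truncLE_truncRank_iff hk0 hcard,
        implies_true]
    refine ⟨truncRank k w, ⟨_, hr, ?_⟩, hface⟩
    rw [← hface, hr.card_add_setDim hk, Fintype.card_fin]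

/-- the number of d-dimensional nonempty exposed faces of
Π_{n−1}(k−1) equals
∑_{(i,j) : 0≤i≤k−1, k≤i+j≤n} C(n,i)·C(n−i,j)·S(n−i−j, n−i−d−1)·(n−i−d−1)!,
with summands taken to be 0 when n−i−d−1 < 0. -/
theorem genPerm_face_count (n k d : ℕ) (hk : 2 ≤ k) (hkn : k ≤ n) (hd : d ≤ n - 1) :
    Nat.card {A : Set (Fin n → ℝ) // IsExpFace (genPerm n k) A ∧ setDim A = d}
      = ∑ i ∈ Finset.range k, ∑ j ∈ Finset.range (n + 1),
          if k ≤ i + j ∧ i + j ≤ n ∧ d + i + 1 ≤ n then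
            n.choose i * (n - i).choose j * stirling2 (n - i - j) (n - i - d - 1)
              * Nat.factorial (n - i - d - 1)
          else 0 := by
  rw [card_genPerm_faces d hk hkn, ncard_truncatedRankings, Fintype.card_fin,
    ← sum_subset (range_mono (hkn.trans n.le_succ)) fun i _ hi => sum_eq_zero fun j _ => by
      rw [truncatedRankingCount, if_neg fun h => hi (mem_range.2 h.1), mul_zero]]
  refine sum_congr rfl fun i hi => sum_congr rfl fun j _ => ?_
  have hik : i < k := mem_range.1 hi
  by_cases hij : i + j ≤ n
  · simp only [truncatedRankingCount, hik, hij, true_and, mul_ite, mul_zero, mul_assoc]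
  · rw [Nat.choose_eq_zero_of_lt (show n - i < j by omega), mul_zero, zero_mul,
      if_neg fun h => hij h.2.1]
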